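/- arXiv:2506.16937 — 2 statements merged into one kernel-verified Lean document; each statement's English description precedes it below -/
import Mathlib

section
/- With notation as above (Q_{φ^{(ℓ)}} the minimal polynomial of π_ℓ = τ^{mℓ} over 𝔽_q(T), d_ℓ = deg Q_{φ^{(ℓ)}}), the equality ε_ℓ(Q_{φ^{(1)}}) = (Q_{φ^{(ℓ)}})^{d₁/d_ℓ} holds; in particular d_ℓ divides d₁. -/
open Polynomial

/-- The twist `τ : x ↦ x^q` (`q = p^ν`), an additive endomorphism of the algebraic
closure of `k`. -/
noncomputable def twistTau (k : Type*) [Field k] (p ν : ℕ) [Fact p.Prime] [CharP k p] :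
    AddMonoid.End (AlgebraicClosure k) :=
  (iterateFrobenius (AlgebraicClosure k) p ν).toAddMonoidHom

/-- Multiplication by (the image of) `c ∈ k`, as an additive endomorphism of the algebraic
closure of `k`. -/
noncomputable def scalarEnd (k : Type*) [Field k] (c : k) : AddMonoid.End (AlgebraicClosure k) :=
  AddMonoidHom.mulLeft (algebraMap k (AlgebraicClosure k) c)

/-- The coefficient map `𝔽_q[T] → 𝔽_q(T) → Ω` into an algebraic closure `Ω` of `𝔽_q(T)`. -/
noncomputable def coeffToClosure (F : Type*) [Field F] [Fintype F] :
    Polynomial F →+* AlgebraicClosure (RatFunc F) :=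
  (algebraMap (RatFunc F) (AlgebraicClosure (RatFunc F))).comp
    (algebraMap (Polynomial F) (RatFunc F))

theorem endMulApply {L : Type*} [Field L] (f g : AddMonoid.End L) (x : L) :
    (f * g) x = f (g x) := rfl

theorem endAddApply {L : Type*} [Field L] (f g : AddMonoid.End L) (x : L) :
    (f + g) x = f x + g x := rfl

/-- `f` is evaluation of the polynomial `P`. -/
def RepBy {L : Type*} [Field L] (f : AddMonoid.End L) (P : Polynomial L) : Prop :=
  ∀ x, f x = P.eval x

theorem RepBy.mul {L : Type*} [Field L] {f g : AddMonoid.End L} {P Q : Polynomial L}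
    (hf : RepBy f P) (hg : RepBy g Q) : RepBy (f * g) (P.comp Q) := by
  intro x
  rw [endMulApply, hg x, hf, eval_comp]

theorem RepBy.add {L : Type*} [Field L] {f g : AddMonoid.End L} {P Q : Polynomial L}
    (hf : RepBy f P) (hg : RepBy g Q) : RepBy (f + g) (P + Q) := by
  intro x
  rw [endAddApply, hg x, hf, eval_add]

theorem RepBy.sum {L : Type*} [Field L] {f : ℕ → AddMonoid.End L} {P : ℕ → Polynomial L}
    (hf : ∀ i, RepBy (f i) (P i)) (n : ℕ) :
    RepBy (∑ i ∈ Finset.range n, f i) (∑ i ∈ Finset.range n, P i) := by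
  induction n with
  | zero => intro x; simp
  | succ n ih => rw [Finset.sum_range_succ, Finset.sum_range_succ]; exact ih.add (hf n)

theorem RepBy.surjective {L : Type*} [Field L] [IsAlgClosed L] {f : AddMonoid.End L}
    {P : Polynomial L} (hf : RepBy f P) (h0 : f ≠ 0) : Function.Surjective f := by
  intro y
  have hdeg : P.natDegree ≠ 0 := by
    intro h
    obtain ⟨c, rfl⟩ := natDegree_eq_zero.mp h
    apply h0
    have hc : c = 0 := by
      have := hf 0
      simpa using this.symm
    ext x
    rw [hf x]
    simp [hc]
  have hd : (P - C y).degree ≠ 0 := by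
    intro h
    apply hdeg
    rw [← natDegree_sub_C (p := P) (a := y)]
    exact natDegree_eq_of_degree_eq_some h
  obtain ⟨x, hx⟩ := IsAlgClosed.exists_root (P - C y) hd
  refine ⟨x, ?_⟩
  rw [hf x]
  have : eval x P - y = 0 := by simpa [IsRoot] using hx
  exact sub_eq_zero.mp this

theorem twistTau_pow_apply (k : Type*) [Field k] (p ν : ℕ) [Fact p.Prime] [CharP k p] (i : ℕ)
    (x : AlgebraicClosure k) : ((twistTau k p ν) ^ i) x = x ^ (p ^ (ν * i)) := by
  induction i generalizing x with
  | zero => simp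
  | succ i ih =>
    rw [pow_succ, endMulApply, ih]
    have : twistTau k p ν x = x ^ p ^ ν := by
      exact iterateFrobenius_def p ν x
    rw [this, ← pow_mul, ← pow_add]
    ring_nf

theorem scalarEnd_apply (k : Type*) [Field k] (c : k) (x : AlgebraicClosure k) :
    scalarEnd k c x = algebraMap k (AlgebraicClosure k) c * x := rfl

theorem repBy_scalar (k : Type*) [Field k] (c : k) :
    RepBy (scalarEnd k c) (C (algebraMap k (AlgebraicClosure k) c) * X) := by
  intro x
  simp [scalarEnd_apply]

theorem repBy_term (k : Type*) [Field k] (p ν : ℕ) [Fact p.Prime] [CharP k p] (c : k) (i : ℕ) :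
    RepBy (scalarEnd k c * (twistTau k p ν) ^ i)
      (C (algebraMap k (AlgebraicClosure k) c) * X ^ (p ^ (ν * i))) := by
  intro x
  rw [endMulApply, scalarEnd_apply, twistTau_pow_apply]
  simp

theorem natDegree_lin (L : Type*) [Field L] (c : ℕ → L) (p ν r : ℕ) (hp : 1 < p) (hν : 0 < ν)
    (hc : c r ≠ 0) :
    (∑ i ∈ Finset.range (r + 1), C (c i) * X ^ (p ^ (ν * i))).natDegree = p ^ (ν * r) := by
  rw [Finset.sum_range_succ]
  have h1 : (C (c r) * X ^ (p ^ (ν * r)) : L[X]).natDegree = p ^ (ν * r) :=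
    natDegree_C_mul_X_pow _ _ hc
  rw [natDegree_add_eq_right_of_natDegree_lt, h1]
  rw [h1]
  have hpos : 0 < p ^ (ν * r) := pow_pos (by omega) _
  have : (∑ i ∈ Finset.range r, C (c i) * X ^ (p ^ (ν * i)) : L[X]).natDegree
      ≤ p ^ (ν * r) - 1 := by
    apply natDegree_sum_le_of_forall_le
    intro i hi
    refine (natDegree_C_mul_X_pow_le _ _).trans ?_
    have : p ^ (ν * i) < p ^ (ν * r) :=
      Nat.pow_lt_pow_right hp (Nat.mul_lt_mul_of_pos_left (Finset.mem_range.mp hi) hν)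
    omega
  omega

theorem rep_of_poly {F L : Type*} [Field F] [Field L] (φ : Polynomial F →+* AddMonoid.End L)
    (c : F → L) (hC : ∀ a, RepBy (φ (C a)) (C (c a) * X)) (hc : ∀ a, a ≠ 0 → c a ≠ 0)
    (P : Polynomial L) (hX : RepBy (φ X) P) (hP : 2 ≤ P.natDegree) (n : ℕ) :
    ∀ g : Polynomial F, g ≠ 0 → g.natDegree = n →
      ∃ G, RepBy (φ g) G ∧ G.natDegree = P.natDegree ^ n := by
  induction n with
  | zero =>
    intro g hg hn
    obtain ⟨a, rfl⟩ := natDegree_eq_zero.mp hn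
    refine ⟨_, hC a, ?_⟩
    rw [natDegree_C_mul_X _ (hc a (by rintro rfl; simp at hg))]
    simp
  | succ n ih =>
    intro g hg hn
    have h1 : g.divX.natDegree = n := by rw [natDegree_divX_eq_natDegree_tsub_one, hn]; rfl
    have h2 : g.divX ≠ 0 := by
      intro h
      have := divX_eq_zero_iff.mp h
      rw [this] at hn
      simp at hn
    obtain ⟨G, hG, hGd⟩ := ih _ h2 h1
    refine ⟨G.comp P + C (c (g.coeff 0)) * X, ?_, ?_⟩
    · have h3 := (hG.mul hX).add (hC (g.coeff 0))
      rwa [← map_mul, ← map_add, divX_mul_X_add] at h3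
    · have hcd : (G.comp P).natDegree = P.natDegree ^ (n + 1) := by
        rw [natDegree_comp, hGd, pow_succ]
      rw [natDegree_add_eq_left_of_natDegree_lt, hcd]
      rw [hcd]
      refine (natDegree_C_mul_le _ _).trans_lt ?_
      rw [natDegree_X]
      exact Nat.one_lt_pow (by omega) (by omega)

/-- The polynomial whose roots are the `ℓ`-th powers descends. -/
theorem exists_descent {K Ω : Type*} [Field K] [Field Ω] (f : K →+* Ω) (Q : K[X])
    (n : ℕ) (α : Fin n → Ω) (hα : Q.map f = ∏ i, (X - C (α i))) (ℓ : ℕ) :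
    ∃ N : K[X], N.map f = ∏ i, (X - C (α i ^ ℓ)) := by
  have key : resultant ((Q.map C).map (mapRingHom f)) ((C X - X ^ ℓ : Polynomial (Polynomial K)).map (mapRingHom f))
      n ℓ = ∏ i, (X - C (α i ^ ℓ)) := by
    have e1 : (Q.map C).map (mapRingHom f) = ∏ i, (X - C (C (α i))) := by
      have : (mapRingHom f).comp C = (C : Ω →+* Polynomial Ω).comp f := by ext; simp
      rw [map_map, this, ← map_map, hα, Polynomial.map_prod]
      simp
    have e2 : (C X - X ^ ℓ : Polynomial (Polynomial K)).map (mapRingHom f) = C X - X ^ ℓ := by simp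
    have hd : (C X - X ^ ℓ : Polynomial (Polynomial Ω)).natDegree ≤ ℓ := by
      refine (natDegree_sub_le _ _).trans ?_
      simp
    have hn : (∏ i, (X - C (C (α i))) : Polynomial (Polynomial Ω)).natDegree = n := by
      rw [natDegree_prod_of_monic _ _ (fun i _ => monic_X_sub_C _)]
      simp
    rw [e1, e2]
    have := resultant_prod_left Finset.univ (fun i => (X - C (C (α i)) : Polynomial (Polynomial Ω))) (C X - X ^ ℓ) ℓ
      (by simp) hd
    rw [hn] at this
    rw [this]
    refine Finset.prod_congr rfl fun i _ => ?_
    rw [natDegree_X_sub_C, resultant_X_sub_C_left _ _ _ hd]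
    simp
  rw [resultant_map_map] at key
  exact ⟨_, key⟩

theorem core_aux {A : Type*} [CommRing A] [IsDomain A] [IsIntegrallyClosed A]
    {K Ω : Type*} [Field K] [Field Ω] [Algebra A K] [IsFractionRing A K] (f : K →+* Ω)
    (Q1 Ql : A[X]) (h1 : Q1.Monic) (hl : Ql.Monic) (hlirr : Irreducible Ql)
    (ℓ : ℕ) (hdvd : Q1 ∣ expand A ℓ Ql)
    (α : Fin Q1.natDegree → Ω)
    (hα : Q1.map (f.comp (algebraMap A K)) = ∏ i, (X - C (α i))) :
    Ql.natDegree ∣ Q1.natDegree ∧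
    ∏ i, (X - C (α i ^ ℓ))
      = (Ql.map (f.comp (algebraMap A K))) ^ (Q1.natDegree / Ql.natDegree) := by
  obtain ⟨N, hN⟩ := exists_descent f (Q1.map (algebraMap A K)) Q1.natDegree α
    (by rw [map_map, hα]) ℓ
  have hmon : (∏ i, (X - C (α i ^ ℓ))).Monic := monic_prod_of_monic _ _ fun i _ => monic_X_sub_C _
  have hdeg : (∏ i, (X - C (α i ^ ℓ))).natDegree = Q1.natDegree := by
    rw [natDegree_prod_of_monic _ _ (fun i _ => monic_X_sub_C _)]
    simp only [natDegree_X_sub_C]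
    simp
  have hNmon : N.Monic := by
    rw [← hN] at hmon
    exact monic_of_injective f.injective hmon
  have hirr : Irreducible (Ql.map (algebraMap A K)) :=
    hl.irreducible_iff_irreducible_map_fraction_map.mp hlirr
  have hroot : ∀ i, (X - C (α i ^ ℓ)) ∣ Ql.map (f.comp (algebraMap A K)) := by
    intro i
    rw [dvd_iff_isRoot, IsRoot]
    have h2 : (X - C (α i)) ∣ (expand A ℓ Ql).map (f.comp (algebraMap A K)) := by
      have h3 := Polynomial.map_dvd (f.comp (algebraMap A K)) hdvd
      rw [hα] at h3
      exact (Finset.dvd_prod_of_mem (fun i => X - C (α i)) (Finset.mem_univ i)).trans h3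
    rw [dvd_iff_isRoot, IsRoot, map_expand, expand_eval] at h2
    exact h2
  have hNdvd : N ∣ (Ql.map (algebraMap A K)) ^ Q1.natDegree := by
    rw [← map_dvd_map' f, hN, Polynomial.map_pow, map_map]
    refine (Finset.prod_dvd_prod_of_dvd _ _ (fun i _ => hroot i)).trans ?_
    simp
  obtain ⟨e, -, he⟩ := (dvd_prime_pow hirr.prime _).mp hNdvd
  have hNe : N = (Ql.map (algebraMap A K)) ^ e :=
    eq_of_monic_of_associated hNmon ((hl.map _).pow e) he
  have hprod : ∏ i, (X - C (α i ^ ℓ)) = (Ql.map (f.comp (algebraMap A K))) ^ e := by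
    rw [← hN, hNe, Polynomial.map_pow, map_map]
  have hd : Q1.natDegree = e * Ql.natDegree := by
    rw [← hdeg, hprod, (hl.map _).natDegree_pow, hl.natDegree_map]
  have hpos : 0 < Ql.natDegree := by
    rw [← hl.natDegree_map (algebraMap A K)]
    exact hirr.natDegree_pos
  refine ⟨⟨e, by rw [hd, mul_comm]⟩, ?_⟩
  rw [hprod, hd, Nat.mul_div_cancel _ hpos]

theorem core {A : Type*} [CommRing A] [IsDomain A] [IsIntegrallyClosed A]
    {K Ω : Type*} [Field K] [Field Ω] [Algebra A K] [IsFractionRing A K] (f : K →+* Ω)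
    {R : Type*} [Ring R] [Nontrivial R] (φ : A →+* R) (x : R) (hφ : Function.Injective φ)
    (hcomm : ∀ a, Commute (φ a) x)
    (hdom : ∀ g h : A[X], eval₂ φ x g * eval₂ φ x h = 0 → eval₂ φ x g = 0 ∨ eval₂ φ x h = 0)
    (ℓ : ℕ) (hℓ : 1 ≤ ℓ)
    (Q1 Ql : A[X]) (h1 : Q1.Monic) (hl : Ql.Monic)
    (h1root : eval₂ φ x Q1 = 0) (hlroot : eval₂ φ (x ^ ℓ) Ql = 0)
    (h1min : ∀ g : A[X], g.Monic → eval₂ φ x g = 0 → Q1.natDegree ≤ g.natDegree)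
    (hlmin : ∀ g : A[X], g.Monic → eval₂ φ (x ^ ℓ) g = 0 → Ql.natDegree ≤ g.natDegree)
    (α : Fin Q1.natDegree → Ω)
    (hα : Q1.map (f.comp (algebraMap A K)) = ∏ i, (X - C (α i))) :
    Ql.natDegree ∣ Q1.natDegree ∧
    ∏ i, (X - C (α i ^ ℓ))
      = (Ql.map (f.comp (algebraMap A K))) ^ (Q1.natDegree / Ql.natDegree) := by
  let ev : A[X] →+* R := eval₂RingHom' φ x hcomm
  have hev : ∀ g, ev g = eval₂ φ x g := fun g => rfl
  have hexp : ∀ g, eval₂ φ (x ^ ℓ) g = ev (expand A ℓ g) := by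
    intro g
    have : eval₂RingHom' φ (x ^ ℓ) (fun a => (hcomm a).pow_right ℓ)
        = ev.comp (expand A ℓ : A[X] →ₐ[A] A[X]).toRingHom := by
      apply Polynomial.ringHom_ext
      · intro a; simp [ev]
      · simp [ev]
    exact congrArg (fun h => h g) this
  have hprime : (RingHom.ker ev).IsPrime := by
    refine ⟨?_, ?_⟩
    · exact RingHom.ker_ne_top ev
    · intro g h hgh
      simp only [RingHom.mem_ker, map_mul] at hgh ⊢
      exact hdom g h hgh
  let B := A[X] ⧸ RingHom.ker ev
  let s : B := Ideal.Quotient.mk _ X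
  have haev : ∀ g : A[X], aeval s g = Ideal.Quotient.mk (RingHom.ker ev) g := by
    intro g
    have : (aeval s : A[X] →ₐ[A] B) = Ideal.Quotient.mkₐ A (RingHom.ker ev) := by
      ext; simp only [aeval_X]; rfl
    rw [this]; rfl
  have hz : ∀ g : A[X], aeval s g = 0 ↔ eval₂ φ x g = 0 := by
    intro g
    rw [haev, Ideal.Quotient.eq_zero_iff_mem, RingHom.mem_ker, hev]
  have hzl : ∀ g : A[X], aeval (s ^ ℓ) g = 0 ↔ eval₂ φ (x ^ ℓ) g = 0 := by
    intro g
    rw [hexp, hev, ← hz, expand_aeval]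
  have hinj : Function.Injective (algebraMap A B) := by
    rw [injective_iff_map_eq_zero]
    intro a ha
    have : aeval s (C a) = 0 := by rw [aeval_C, ha]
    rw [hz, eval₂_C] at this
    exact (map_eq_zero_iff φ hφ).mp this
  have : IsDomain B := Ideal.Quotient.isDomain _
  have : FaithfulSMul A B := (faithfulSMul_iff_algebraMap_injective A B).mpr hinj
  have htf : Module.IsTorsionFree A B := inferInstance
  have e1 : Q1 = minpoly A s := by
    refine IsIntegrallyClosed.minpoly.unique h1 ((hz _).mpr h1root) fun g hg hg0 => ?_
    rw [degree_eq_natDegree hg.ne_zero]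
    exact degree_le_natDegree.trans (by exact_mod_cast h1min g hg ((hz _).mp hg0))
  have el : Ql = minpoly A (s ^ ℓ) := by
    refine IsIntegrallyClosed.minpoly.unique hl ((hzl _).mpr hlroot) fun g hg hg0 => ?_
    rw [degree_eq_natDegree hg.ne_zero]
    exact degree_le_natDegree.trans (by exact_mod_cast hlmin g hg ((hzl _).mp hg0))
  refine core_aux f Q1 Ql h1 hl ?_ ℓ ?_ α hα
  · rw [el]
    exact minpoly.irreducible ⟨Ql, hl, (hzl _).mpr hlroot⟩
  · have hintegral : IsIntegral A s := ⟨Q1, h1, (hz _).mpr h1root⟩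
    have h3 : minpoly A s ∣ expand A ℓ Ql := by
      apply minpoly.isIntegrallyClosed_dvd hintegral
      rw [expand_aeval]
      exact (hzl _).mpr hlroot
    rwa [← e1] at h3

/-- with `Q_{φ^{(ℓ)}}` the minimal polynomial of the Frobenius
`π_ℓ = τ^{mℓ}` of the Drinfeld module `φ^{(ℓ)}` and `d_ℓ = deg Q_{φ^{(ℓ)}}`, one has
`ε_ℓ(Q_{φ^{(1)}}) = (Q_{φ^{(ℓ)}})^{d₁/d_ℓ}`; in particular `d_ℓ` divides `d₁`. -/
theorem eps_ell_eq_power_of_min_poly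
    (p ν : ℕ) [Fact p.Prime] (hν : 0 < ν)
    (F : Type*) [Field F] [Fintype F] (hq : Fintype.card F = p ^ ν)
    (E : Type*) [Field E] [Fintype E] [Algebra F E]
    (k : Type*) [Field k] [Fintype k] [CharP k p] [Algebra F k] [Algebra E k]
    [IsScalarTower F E k]
    (m ℓ : ℕ) (hm : 1 ≤ m) (hℓ : 1 ≤ ℓ)
    (hcardE : Fintype.card E = p ^ (ν * m))
    (hcardk : Fintype.card k = p ^ (ν * m * ℓ))
    (r : ℕ) (hr : 1 ≤ r)
    (φ : Polynomial F →+* AddMonoid.End (AlgebraicClosure k))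
    (hφC : ∀ a : F, φ (C a) = scalarEnd k (algebraMap F k a))
    (t : ℕ → E) (htr : t r ≠ 0)
    (hφX : φ X = ∑ i ∈ Finset.range (r + 1),
      scalarEnd k (algebraMap E k (t i)) * (twistTau k p ν) ^ i)
    -- `Q_{φ^{(1)}}` : the minimal monic polynomial of `π₁ = τ^m` over `𝔽_q[T]`
    (Q1 : Polynomial (Polynomial F)) (hQ1monic : Q1.Monic)
    (hQ1root : Polynomial.eval₂ φ ((twistTau k p ν) ^ m) Q1 = 0)
    (hQ1min : ∀ g : Polynomial (Polynomial F), g.Monic →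
      Polynomial.eval₂ φ ((twistTau k p ν) ^ m) g = 0 → Q1.natDegree ≤ g.natDegree)
    -- `Q_{φ^{(ℓ)}}` : the minimal monic polynomial of `π_ℓ = τ^{mℓ}` over `𝔽_q[T]`
    (Ql : Polynomial (Polynomial F)) (hQlmonic : Ql.Monic)
    (hQlroot : Polynomial.eval₂ φ ((twistTau k p ν) ^ (m * ℓ)) Ql = 0)
    (hQlmin : ∀ g : Polynomial (Polynomial F), g.Monic →
      Polynomial.eval₂ φ ((twistTau k p ν) ^ (m * ℓ)) g = 0 → Ql.natDegree ≤ g.natDegree)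
    -- the roots of `Q_{φ^{(1)}}` in `Ω`, with multiplicity
    (α : Fin Q1.natDegree → AlgebraicClosure (RatFunc F))
    (hα : Q1.map (coeffToClosure F) = ∏ i, (X - C (α i))) :
    Ql.natDegree ∣ Q1.natDegree ∧
    ∏ i, (X - C (α i ^ ℓ))
      = (Ql.map (coeffToClosure F)) ^ (Q1.natDegree / Ql.natDegree) := by
  have hp1 : 1 < p := (Fact.out : p.Prime).one_lt
  have hP := RepBy.sum (fun i => repBy_term k p ν (algebraMap E k (t i)) i) (r + 1)
  rw [← hφX] at hP
  have hPd := natDegree_lin (AlgebraicClosure k)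
    (fun i => algebraMap k (AlgebraicClosure k) (algebraMap E k (t i))) p ν r hp1 hν
    (by simpa using htr)
  have hP2 : 2 ≤ p ^ (ν * r) := Nat.one_lt_pow (Nat.mul_pos hν hr).ne' hp1
  have hrep : ∀ g : Polynomial F, g ≠ 0 →
      ∃ G, RepBy (φ g) G ∧ G.natDegree = (p ^ (ν * r)) ^ g.natDegree := by
    intro g hg
    have := rep_of_poly φ (fun a => algebraMap k (AlgebraicClosure k) (algebraMap F k a))
      (fun a => by rw [hφC]; exact repBy_scalar k _) (fun a ha => by simpa using ha)
      _ hP (by rw [hPd]; exact hP2) g.natDegree g hg rfl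
    rwa [hPd] at this
  have hrep' : ∀ g : Polynomial F, ∃ G, RepBy (φ g) G := by
    intro g
    by_cases hg : g = 0
    · exact ⟨0, fun x => by simp [hg]⟩
    · obtain ⟨G, hG, -⟩ := hrep g hg
      exact ⟨G, hG⟩
  have hinj : Function.Injective φ := by
    rw [injective_iff_map_eq_zero]
    intro g hg
    by_contra hne
    obtain ⟨G, hG, hd⟩ := hrep g hne
    have hG0 : G = 0 := by
      apply Polynomial.funext
      intro x
      rw [← hG x, hg]
      simp
    rw [hG0, natDegree_zero] at hd
    have : 0 < (p ^ (ν * r)) ^ g.natDegree := pow_pos (by omega) _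
    omega
  have hfix : ∀ (e : E), Commute (scalarEnd k (algebraMap E k e)) ((twistTau k p ν) ^ m) := by
    intro e
    ext x
    simp only [endMulApply, scalarEnd_apply, twistTau_pow_apply]
    rw [mul_pow, ← map_pow, ← map_pow, ← hcardE, FiniteField.pow_card]
  have hcomm : ∀ g, Commute (φ g) ((twistTau k p ν) ^ m) := by
    intro g
    induction g using Polynomial.induction_on' with
    | add a b ha hb => rw [map_add]; exact ha.add_left hb
    | monomial n a =>
      rw [← C_mul_X_pow_eq_monomial, map_mul, map_pow]
      refine Commute.mul_left ?_ (Commute.pow_left ?_ n)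
      · rw [hφC, IsScalarTower.algebraMap_apply F E k]
        exact hfix _
      · rw [hφX]
        exact Commute.sum_left _ _ _ fun i _ =>
          (hfix _).mul_left (Commute.pow_pow_self _ _ _)
  have hrep2 : ∀ g : Polynomial (Polynomial F),
      ∃ G, RepBy (eval₂ φ ((twistTau k p ν) ^ m) g) G := by
    intro g
    induction g using Polynomial.induction_on' with
    | add a b ha hb =>
      obtain ⟨G, hG⟩ := ha
      obtain ⟨H, hH⟩ := hb
      exact ⟨G + H, by rw [eval₂_add]; exact hG.add hH⟩
    | monomial n a =>
      obtain ⟨G, hG⟩ := hrep' a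
      refine ⟨G.comp (X ^ (p ^ (ν * (m * n)))), ?_⟩
      rw [eval₂_monomial]
      refine hG.mul ?_
      intro x
      rw [← pow_mul, twistTau_pow_apply]
      simp
  have hdom : ∀ g h : Polynomial (Polynomial F),
      eval₂ φ ((twistTau k p ν) ^ m) g * eval₂ φ ((twistTau k p ν) ^ m) h = 0 →
      eval₂ φ ((twistTau k p ν) ^ m) g = 0 ∨ eval₂ φ ((twistTau k p ν) ^ m) h = 0 := by
    intro g h hgh
    by_contra! hne
    obtain ⟨H, hH⟩ := hrep2 h
    apply hne.1
    ext y
    obtain ⟨x, rfl⟩ := hH.surjective hne.2 y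
    rw [← endMulApply, hgh]
    simp
  have : Nontrivial (AddMonoid.End (AlgebraicClosure k)) := by
    refine ⟨⟨1, 0, fun h => ?_⟩⟩
    have h1 := DFunLike.congr_fun h (1 : AlgebraicClosure k)
    simp at h1
  rw [pow_mul] at hQlroot
  simp only [pow_mul] at hQlmin
  exact core (algebraMap (RatFunc F) (AlgebraicClosure (RatFunc F))) φ ((twistTau k p ν) ^ m)
    hinj hcomm hdom ℓ hℓ Q1 Ql hQ1monic hQlmonic hQ1root hQlroot hQ1min hQlmin α hα
end

section
/- Let C_L^{(ℓ)} ∈ 𝔽_q[T] denote the characteristic polynomial of the 𝔽_q-linear map induced by the q-linearized polynomial L (of q-degree r, defined over 𝔽_{q^m}) on the field 𝔽_{q^{mℓ}}. Then the sequence {C_L^{(ℓ)}}_{ℓ≥1} is a linear recurrence sequence over 𝔽_q[T] of order at most 2^r. -/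
open Polynomial

/-- The `𝔽_q`-linear map on `K` induced by the `q`-linearized polynomial
`L = Σ_{i=0}^r tᵢ Z^{qⁱ}`, i.e. `x ↦ Σ_{i=0}^r tᵢ x^{qⁱ}`. -/
noncomputable def qLinearMap (F : Type*) [Field F] [Fintype F] (p ν : ℕ) [Fact p.Prime]
    (hq : Fintype.card F = p ^ ν)
    (K : Type*) [Field K] [CharP K p] [Algebra F K] (r : ℕ) (t : ℕ → K) : K →ₗ[F] K where
  toFun x := ∑ i ∈ Finset.range (r + 1), t i * x ^ (Fintype.card F ^ i)
  map_add' x y := by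
    rw [← Finset.sum_add_distrib]
    refine Finset.sum_congr rfl fun i _ => ?_
    rw [hq, ← pow_mul, add_pow_char_pow, mul_add]
  map_smul' c x := by
    simp only [Algebra.smul_def, RingHom.id_apply, Finset.mul_sum]
    refine Finset.sum_congr rfl fun i _ => ?_
    rw [mul_pow, ← map_pow, FiniteField.pow_card_pow]
    ring

/-- retraction lemma -/
lemma retract_aux {A : Type*} [CommRing A] [IsDomain A] [IsPrincipalIdealRing A]
    {K : Type*} [Field K] [Algebra A K] (hinj : Function.Injective (algebraMap A K))
    (d : ℕ) (c : Fin d → K) (hc : ∀ i, IsIntegral A (c i)) :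
    ∃ c' : Fin d → A, ∀ (x : Fin d → A) (y : A),
      algebraMap A K y = ∑ i, c i * algebraMap A K (x i) → y = ∑ i, c' i * x i := by
  classical
  have : Module.IsTorsionFree A K := by
    have : FaithfulSMul A K := (faithfulSMul_iff_algebraMap_injective A K).2 hinj
    infer_instance
  set N : Submodule A K := Submodule.span A (insert 1 (Set.range c)) with hN
  have h1 : (1 : K) ∈ N := Submodule.subset_span (Set.mem_insert _ _)
  have hcN : ∀ i, c i ∈ N := fun i => Submodule.subset_span (Set.mem_insert_of_mem _ ⟨i, rfl⟩)
  have hint : ∀ x ∈ N, IsIntegral A x := by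
    have : N ≤ (integralClosure A K).toSubmodule := by
      rw [hN, Submodule.span_le]
      rintro x (rfl | ⟨i, rfl⟩)
      · exact isIntegral_one
      · exact hc i
    exact fun x hx => this hx
  have : Module.Finite A N := by
    apply Module.Finite.span_of_finite
    exact (Set.finite_range c).insert 1
  let f : A →ₗ[A] N := LinearMap.toSpanSingleton A N ⟨1, h1⟩
  have hf : ∀ a, ((f a : N) : K) = algebraMap A K a := fun a => by
    simp [f, Algebra.algebraMap_eq_smul_one]
  have hfi : Function.Injective f := fun a b hab => hinj (by rw [← hf, ← hf, hab])
  let g := (LinearMap.range f).mkQ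
  have hex : Function.Exact f g := LinearMap.exact_map_mkQ_range f
  have htf : Module.IsTorsionFree A (N ⧸ LinearMap.range f) := by
    rw [Module.isTorsionFree_iff_smul_eq_zero]
    intro a x hax
    by_cases ha : a = 0
    · exact Or.inl ha
    right
    obtain ⟨n, rfl⟩ := Submodule.mkQ_surjective _ x
    rw [← map_smul, Submodule.mkQ_apply, Submodule.Quotient.mk_eq_zero] at hax
    obtain ⟨b, hb⟩ := hax
    rw [Submodule.mkQ_apply, Submodule.Quotient.mk_eq_zero]
    have hb' : algebraMap A K b = algebraMap A K a * n := by
      rw [← hf, hb]; simp [Algebra.smul_def]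
    let Q := FractionRing A
    have : FaithfulSMul A K := (faithfulSMul_iff_algebraMap_injective A K).2 hinj
    let _ : Algebra Q K := FractionRing.liftAlgebra A K
    have ha' : algebraMap A K a ≠ 0 := fun h => ha (hinj (by simpa using h))
    have hq : algebraMap Q K (algebraMap A Q b / algebraMap A Q a) = n := by
      rw [map_div₀, ← IsScalarTower.algebraMap_apply, ← IsScalarTower.algebraMap_apply, hb']
      field_simp
    have hi : IsIntegral A (algebraMap A Q b / algebraMap A Q a) := by
      rw [← isIntegral_algebraMap_iff (algebraMap Q K).injective, hq]
      exact hint _ n.2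
    obtain ⟨z, hz⟩ := IsIntegrallyClosed.isIntegral_iff.1 hi
    refine ⟨z, Subtype.ext ?_⟩
    rw [hf, ← hq, ← hz, ← IsScalarTower.algebraMap_apply]
  have hfin : Module.Finite A (N ⧸ LinearMap.range f) := inferInstance
  have hfree : Module.Free A (N ⧸ LinearMap.range f) := inferInstance
  obtain ⟨s, hs⟩ := Module.projective_lifting_property g LinearMap.id (Submodule.mkQ_surjective _)
  have hsp : Function.Surjective g ∧ ∃ l, l ∘ₗ f = LinearMap.id :=
    ((Function.Exact.split_tfae' hex).out 0 1 rfl rfl).1 ⟨hfi, s, hs⟩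
  obtain ⟨-, l, hl⟩ := hsp
  refine ⟨fun i => l ⟨c i, hcN i⟩, fun x y h => ?_⟩
  have h2 : f y = ∑ i, x i • (⟨c i, hcN i⟩ : N) := by
    apply Subtype.ext
    rw [hf, h]
    simp [Algebra.smul_def, mul_comm]
  have h3 := congrArg l h2
  rw [← LinearMap.comp_apply, hl] at h3
  rw [LinearMap.id_apply, map_sum] at h3
  rw [h3]
  refine Finset.sum_congr rfl fun i _ => ?_
  rw [map_smul, smul_eq_mul, mul_comm]

lemma recur_aux {O : Type*} [CommRing O] (r : ℕ) (b : Fin r → O) (g : O) :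
    ∃ c : Fin (2 ^ r) → O, ∀ ℓ : ℕ,
      g ^ (ℓ + 2 ^ r) * ∏ i, (b i ^ (ℓ + 2 ^ r) - 1) =
      ∑ j : Fin (2 ^ r), c j * (g ^ (ℓ + j.val) * ∏ i, (b i ^ (ℓ + j.val) - 1)) := by
  classical
  nontriviality O
  let γ : Finset (Fin r) → O := fun S => g * ∏ i ∈ S, b i
  let ε : Finset (Fin r) → O := fun S => (-1) ^ (Finset.univ \ S).card
  have hu : ∀ ℓ : ℕ, g ^ ℓ * ∏ i, (b i ^ ℓ - 1) = ∑ S, ε S * γ S ^ ℓ := by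
    intro ℓ
    simp only [sub_eq_add_neg]
    rw [Finset.prod_add, Finset.mul_sum, Finset.powerset_univ]
    refine Finset.sum_congr rfl fun S _ => ?_
    simp only [γ, ε, Finset.prod_const, mul_pow, Finset.prod_pow]
    ring
  let Q : O[X] := ∏ S : Finset (Fin r), (X - C (γ S))
  have hQm : Q.Monic := monic_prod_X_sub_C _ _
  have hQd : Q.natDegree = 2 ^ r := by
    simp [Q]
  have hQe : ∀ S, Q.eval (γ S) = 0 := fun S => by
    simp only [Q, eval_prod]
    exact Finset.prod_eq_zero (Finset.mem_univ S) (by simp)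
  refine ⟨fun j => - Q.coeff j, fun ℓ => ?_⟩
  simp only [hu]
  have key : ∀ S, γ S ^ (2 ^ r) = ∑ j : Fin (2 ^ r), - Q.coeff j * γ S ^ j.val := by
    intro S
    have := hQe S
    rw [eval_eq_sum_range, hQd, Finset.sum_range_succ, ← hQd, hQm.coeff_natDegree, hQd,
      Finset.sum_range] at this
    simp only [neg_mul, Finset.sum_neg_distrib]
    linear_combination this
  simp only [Finset.mul_sum]
  rw [Finset.sum_comm]
  refine Finset.sum_congr rfl fun S _ => ?_
  rw [pow_add, key, Finset.mul_sum, Finset.mul_sum]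
  refine Finset.sum_congr rfl fun j _ => ?_
  ring

/-- cyclic shift matrix -/
def shiftMat (R : Type*) [CommRing R] (n : ℕ) : Matrix (Fin n) (Fin n) R :=
  fun b b' => if b'.val = (b.val + 1) % n then 1 else 0

lemma shiftMat_pow (R : Type*) [CommRing R] (n : ℕ) (k : ℕ) (b b' : Fin n) :
    (shiftMat R n ^ k) b b' = if b'.val = (b.val + k) % n then 1 else 0 := by
  induction k generalizing b b' with
  | zero => 
    simp [Matrix.one_apply, Nat.mod_eq_of_lt b.2, Fin.ext_iff, eq_comm]
  | succ k ih =>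
    have hn : 0 < n := b.pos
    rw [pow_succ, Matrix.mul_apply]
    rw [Finset.sum_eq_single (⟨(b.val + k) % n, Nat.mod_lt _ hn⟩ : Fin n)]
    · rw [ih]; simp [shiftMat, add_assoc]
    · intro c _ hc
      rw [ih, if_neg, zero_mul]
      intro h; exact hc (Fin.ext h)
    · simp

lemma shiftMat_charpoly (R : Type*) [CommRing R] [Nontrivial R] (n : ℕ) (hn : 0 < n) :
    (shiftMat R n).charpoly = X ^ n - 1 := by
  rw [← sub_eq_zero]
  set g := (shiftMat R n).charpoly - (X ^ n - 1) with hg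
  have h0 : aeval (shiftMat R n) g = 0 := by
    have h1 : shiftMat R n ^ n = 1 := by
      ext b b'
      rw [shiftMat_pow]
      simp [Matrix.one_apply, Nat.mod_eq_of_lt b.2, Fin.ext_iff, eq_comm]
    simp [hg, Matrix.aeval_self_charpoly, h1]
  have hd : g.degree < n := by
    have h1 : (shiftMat R n).charpoly.degree = n := by
      rw [Matrix.charpoly_degree_eq_dim]; simp
    have h2 : (X ^ n - 1 : R[X]).degree = n := by
      have := degree_X_pow_sub_C hn (1 : R)
      simpa using this
    have := degree_sub_lt_left (h1.trans h2.symm) (by rw [← degree_ne_bot, h1]; simp) (by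
      rw [(Matrix.charpoly_monic _).leadingCoeff]
      have := leadingCoeff_X_pow_sub_C (r := (1 : R)) hn
      simpa using this.symm)
    rwa [h1] at this
  ext j
  by_cases hj : j < n
  · have h2 := congrFun (congrFun h0 ⟨0, hn⟩) ⟨j, hj⟩
    by_cases hg0 : g = 0
    · simp [hg0]
    have hnd : g.natDegree < n := (natDegree_lt_iff_degree_lt hg0).2 hd
    rw [aeval_eq_sum_range' hnd, Matrix.sum_apply] at h2
    simp only [Matrix.smul_apply, shiftMat_pow] at h2
    rw [Finset.sum_eq_single j] at h2
    · simpa [Nat.mod_eq_of_lt hj] using h2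
    · intro k hk hkj
      rw [Finset.mem_range] at hk
      simp only [zero_add, Nat.mod_eq_of_lt hk]
      rw [if_neg (Ne.symm hkj)]; simp
    · intro h; exact absurd (Finset.mem_range.2 hj) h
  · rw [coeff_zero]
    apply coeff_eq_zero_of_degree_lt
    exact lt_of_lt_of_le hd (by exact_mod_cast not_lt.1 hj)

lemma det_aeval_shift {K : Type*} [Field K] [IsAlgClosed K] (n : ℕ) (hn : 0 < n) (G : K[X]) :
    (aeval (shiftMat K n) G).det =
      ((-1) ^ G.natDegree * G.leadingCoeff) ^ n * (G.roots.map fun b => b ^ n - 1).prod := by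
  have hs := IsAlgClosed.splits G
  have h1 : ∀ b : K, (aeval (shiftMat K n) (X - C b)).det = (-1) ^ n * (b ^ n - 1) := by
    intro b
    have h2 := Matrix.eval_charpoly (shiftMat K n) b
    rw [shiftMat_charpoly K n hn] at h2
    have h3 : aeval (shiftMat K n) (X - C b) = - (Matrix.scalar (Fin n) b - shiftMat K n) := by
      simp [Algebra.algebraMap_eq_smul_one, Matrix.smul_one_eq_diagonal]
    rw [h3, Matrix.det_neg, ← h2]
    simp
  have h4 : ∀ s : Multiset K, (aeval (shiftMat K n) (s.map fun b => X - C b).prod).det =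
      ((-1) ^ s.card) ^ n * (s.map fun b => b ^ n - 1).prod := by
    intro s
    induction s using Multiset.induction_on with
    | empty => simp
    | cons a s ih =>
      rw [Multiset.map_cons, Multiset.prod_cons, map_mul, Matrix.det_mul, ih, h1]
      simp only [Multiset.map_cons, Multiset.prod_cons, Multiset.card_cons]
      ring
  conv_lhs => rw [hs.eq_prod_roots]
  rw [map_mul, Matrix.det_mul, h4, aeval_C, ← hs.natDegree_eq_card_roots]
  rw [Algebra.algebraMap_eq_smul_one, Matrix.det_smul]
  simp
  ring

/-- The block symbol. -/
noncomputable def Hmat {R : Type*} [CommRing R] (m r : ℕ) (s : ℕ → ℕ → R) (τ : R) :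
    Matrix (Fin m) (Fin m) R[X] :=
  Matrix.of fun a a' => (if a = a' then C τ else 0) -
    ∑ i ∈ Finset.range (r + 1),
      if a'.val = (a.val + i) % m then C (s i a) * X ^ ((a.val + i) / m) else 0

noncomputable def H1mat {R : Type*} [CommRing R] (m r : ℕ) (s : ℕ → ℕ → R) (τ : R) :
    Matrix (Fin m) (Fin m) R[X] :=
  Matrix.of fun a a' => (if a = a' then C τ else 0) -
    ∑ i ∈ Finset.range (r + 1),
      if a'.val = (a.val + i) % m then C (s i a) * X ^ i else 0

def Wmat {R : Type*} [CommRing R] (m : ℕ) (k : ℕ) (s : ℕ → R) :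
    Matrix (Fin m) (Fin m) R :=
  Matrix.of fun a a' => - if a'.val = (a.val + k) % m then s a else 0

lemma Hmat_map {R S : Type*} [CommRing R] [CommRing S] (f : R →+* S) (m r : ℕ)
    (s : ℕ → ℕ → R) (τ : R) :
    (Hmat m r s τ).det.map f = (Hmat m r (fun i a => f (s i a)) (f τ)).det := by
  rw [← coe_mapRingHom, RingHom.map_det]
  congr 1
  ext1 a a'
  simp only [Hmat, RingHom.mapMatrix_apply, Matrix.map_apply, Matrix.of_apply, map_sub, map_sum]
  congr 1
  · split_ifs <;> simp
  · refine Finset.sum_congr rfl fun i _ => ?_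
    split_ifs <;> simp

lemma expand_det {R : Type*} [CommRing R] [IsDomain R] (m r : ℕ) 
    (s : ℕ → ℕ → R) (τ : R) :
    expand R m (Hmat m r s τ).det = (H1mat m r s τ).det := by
  have hD : (Matrix.diagonal fun a : Fin m => (X : R[X]) ^ a.val).det ≠ 0 := by
    rw [Matrix.det_diagonal]
    exact Finset.prod_ne_zero_iff.2 fun a _ => pow_ne_zero _ X_ne_zero
  apply mul_left_cancel₀ hD
  rw [← AlgHom.coe_toRingHom, RingHom.map_det, mul_comm, ← Matrix.det_mul, ← Matrix.det_mul]
  congr 1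
  ext1 a a'
  rw [Matrix.mul_diagonal, Matrix.diagonal_mul]
  simp only [Hmat, H1mat, RingHom.mapMatrix_apply, Matrix.map_apply, Matrix.of_apply, map_sub,
    map_sum, sub_mul, mul_sub, Finset.sum_mul, Finset.mul_sum]
  congr 1
  · split_ifs with h
    · subst h
      rw [mul_comm]
      simp only [AlgHom.coe_toRingHom, expand_C]
    · rw [map_zero, zero_mul, mul_zero]
  · refine Finset.sum_congr rfl fun i _ => ?_
    split_ifs with h
    · simp only [AlgHom.coe_toRingHom, map_mul, expand_C, map_pow, expand_X]
      have : m * ((a.val + i) / m) + a'.val = a.val + i := by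
        rw [h]; exact Nat.div_add_mod _ _
      rw [← pow_mul, mul_assoc, ← pow_add, this]
      ring
    · simp

lemma Hdet_degree {R : Type*} [CommRing R] [IsDomain R] (m r : ℕ) (hm : 0 < m) (hr : 1 ≤ r)
    (s : ℕ → ℕ → R) (τ : R) :
    (Hmat m r s τ).det.natDegree ≤ r ∧ (Hmat m r s τ).det.coeff r = (Wmat m r (s r)).det := by
  have hdeg : ∀ a a', (H1mat m r s τ a a').natDegree ≤ r := by
    intro a a'
    simp only [H1mat, Matrix.of_apply]
    refine (natDegree_sub_le_of_le (m := r) (n := r) ?_ ?_).trans (by simp)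
    · split_ifs <;> simp
    · refine natDegree_sum_le_of_forall_le _ _ fun i hi => ?_
      rw [Finset.mem_range] at hi
      split_ifs
      · exact (natDegree_C_mul_X_pow_le _ _).trans (by omega)
      · simp
  have hcoeff : ∀ a a', (H1mat m r s τ a a').coeff r = Wmat m r (s r) a a' := by
    intro a a'
    simp only [H1mat, Wmat, Matrix.of_apply, coeff_sub, finsetSum_coeff]
    rw [Finset.sum_eq_single r]
    · have : (if a = a' then C τ else 0 : R[X]).coeff r = 0 := by
        split_ifs
        · rw [coeff_C]; exact if_neg (by omega)
        · simp
      rw [this]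
      split_ifs <;> simp
    · intro i _ hi
      split_ifs
      · rw [coeff_C_mul_X_pow, if_neg (Ne.symm hi)]
      · simp
    · simp
  have hd1 : (H1mat m r s τ).det.natDegree ≤ m * r := by
    rw [Matrix.det_apply]
    refine natDegree_sum_le_of_forall_le _ _ fun σ _ => ?_
    refine (natDegree_smul_le _ _).trans ?_
    refine (natDegree_prod_le _ _).trans ?_
    refine (Finset.sum_le_sum fun i _ => hdeg (σ i) i).trans ?_
    simp
  have hc1 : (H1mat m r s τ).det.coeff (m * r) = (Wmat m r (s r)).det := by
    rw [Matrix.det_apply, Matrix.det_apply, finsetSum_coeff]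
    refine Finset.sum_congr rfl fun σ _ => ?_
    rw [coeff_smul]
    congr 1
    have := coeff_prod_of_natDegree_le (s := Finset.univ)
      (fun i => H1mat m r s τ (σ i) i) r (fun i _ => hdeg _ _)
    simp only [Finset.card_univ, Fintype.card_fin] at this
    rw [this]
    exact Finset.prod_congr rfl fun i _ => hcoeff _ _
  rw [← expand_det] at hd1 hc1
  rw [natDegree_expand, mul_comm] at hd1
  rw [mul_comm, coeff_expand_mul hm] at hc1
  exact ⟨Nat.le_of_mul_le_mul_left hd1 hm, hc1⟩

lemma Wmat_det_ne_zero {R : Type*} [Field R] (m r : ℕ) (s : ℕ → R) (hs : ∀ a, s a ≠ 0) :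
    (Wmat m r s).det ≠ 0 := by
  intro h
  obtain ⟨v, hv, hv0⟩ := Matrix.exists_mulVec_eq_zero_iff.2 h
  apply hv
  ext j
  have hm : 0 < m := j.pos
  -- find a with (a + r) % m = j
  have hmod : ((j.val + m * r - r) % m + r) % m = j.val := by
    have : r ≤ m * r := Nat.le_mul_of_pos_left r hm
    rw [Nat.mod_add_mod, Nat.sub_add_cancel (by omega), Nat.add_mul_mod_self_left,
      Nat.mod_eq_of_lt j.2]
  have h2 := congrFun hv0 ⟨(j.val + m * r - r) % m, Nat.mod_lt _ hm⟩
  rw [Matrix.mulVec, dotProduct, Finset.sum_eq_single j] at h2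
  · simp only [Wmat, Matrix.of_apply, hmod, if_true, Pi.zero_apply] at h2
    simpa [hs] using h2
  · intro b _ hb
    simp only [Wmat, Matrix.of_apply, hmod]
    rw [if_neg (fun h => hb (Fin.ext h))]
    simp
  · simp

lemma moore_det_ne_zero {K : Type*} [Field K] [Fintype K] {𝒦 : Type*} [Field 𝒦]
    (q m n : ℕ) (hq : 1 < q) (hm : 0 < m) (hcard : Fintype.card K = q ^ (m * n)) (ι : K →+* 𝒦)
    (v : Fin m × Fin n → 𝒦) (hv : ∀ x : K, ∑ j, v j * ι x ^ q ^ (j.1.val + m * j.2.val) = 0) :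
    v = 0 := by
  classical
  let g : 𝒦[X] := ∑ j, C (v j) * X ^ q ^ (j.1.val + m * j.2.val)
  have hlt : ∀ j : Fin m × Fin n, j.1.val + m * j.2.val < m * n := by
    rintro ⟨a, b⟩
    have h1 := a.2
    have h2 : m * (b.val + 1) ≤ m * n := Nat.mul_le_mul_left _ b.2
    simp only
    rw [mul_add] at h2
    omega
  have hinj : ∀ i j : Fin m × Fin n,
      i.1.val + m * i.2.val = j.1.val + m * j.2.val → i = j := by
    rintro ⟨a, b⟩ ⟨a', b'⟩ h
    simp only at h
    have h1 := congrArg (· % m) h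
    have h2 := congrArg (· / m) h
    simp only [Nat.add_mul_mod_self_left, Nat.mod_eq_of_lt a.2, Nat.mod_eq_of_lt a'.2] at h1
    simp only [Nat.add_mul_div_left _ _ hm, Nat.div_eq_of_lt a.2, Nat.div_eq_of_lt a'.2,
      zero_add] at h2
    exact Prod.ext (Fin.ext h1) (Fin.ext h2)
  have hg0 : g = 0 := by
    apply eq_zero_of_natDegree_lt_card_of_eval_eq_zero g (f := ι) ι.injective
    · intro x
      simp only [g, eval_finsetSum, eval_mul, eval_C, eval_pow, eval_X]
      exact hv x
    · rw [hcard]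
      have : g.natDegree ≤ q ^ (m * n) - 1 := by
        refine natDegree_sum_le_of_forall_le _ _ fun j _ => ?_
        refine (natDegree_C_mul_X_pow_le _ _).trans ?_
        exact Nat.le_sub_one_of_lt (Nat.pow_lt_pow_right hq (hlt j))
      have : 0 < q ^ (m * n) := by positivity
      omega
  ext j
  have h3 := congrArg (fun p => coeff p (q ^ (j.1.val + m * j.2.val))) hg0
  simp only [g, finsetSum_coeff, coeff_C_mul_X_pow, coeff_zero] at h3
  rw [Finset.sum_eq_single j] at h3
  · simpa using h3
  · intro i _ hi
    rw [if_neg]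
    intro h
    exact hi (hinj _ _ (Nat.pow_right_injective hq h).symm)
  · simp

lemma charpoly_eval_eq {F E K 𝒦 : Type*} [Field F] [Fintype F] [Field E] [Fintype E] [Field K]
    [Fintype K] [Field 𝒦]
    [Algebra F E] [Algebra F K] [Algebra E K] [IsScalarTower F E K] [Module.Finite F K]
    [Algebra F 𝒦] (ι : K →ₐ[F] 𝒦) (q m n r : ℕ) (hq : Fintype.card F = q)
    (hm : 0 < m) (hE : Fintype.card E = q ^ m) (hK : Fintype.card K = q ^ (m * n))
    (t : ℕ → E) (L : K →ₗ[F] K)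
    (hL : ∀ x, L x = ∑ i ∈ Finset.range (r + 1), algebraMap E K (t i) * x ^ q ^ i) (τ : 𝒦) :
    aeval τ L.charpoly = (aeval (shiftMat 𝒦 n)
      (Hmat m r (fun i a => ι (algebraMap E K (t i)) ^ q ^ a) τ).det).det := by
  classical
  have hq1 : 1 < q := hq ▸ Fintype.one_lt_card
  have hfr : Module.finrank F K = m * n := by
    have := Module.card_eq_pow_finrank (K := F) (V := K)
    rw [hK, hq] at this
    exact (Nat.pow_right_injective hq1 this).symm
  let bas : Module.Basis (Fin m × Fin n) F K :=
    (Module.finBasisOfFinrankEq F K hfr).reindex finProdFinEquiv.symm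
  -- Frobenius powers over `F`
  have hlin : ∀ (s : ℕ) (c : Fin m × Fin n → F),
      (ι (∑ j, c j • bas j)) ^ q ^ s = ∑ j, algebraMap F 𝒦 (c j) * ι (bas j) ^ q ^ s := by
    intro s c
    have h1 : ∀ x : 𝒦, x ^ q ^ s = ((FiniteField.frobeniusAlgHom F 𝒦) ^ s) x := by
      intro x
      rw [AlgHom.coe_pow, FiniteField.coe_frobeniusAlgHom, pow_iterate, hq]
    rw [h1, map_sum, map_sum]
    refine Finset.sum_congr rfl fun j _ => ?_
    rw [map_smul, map_smul, ← h1, Algebra.smul_def]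
  let A := LinearMap.toMatrix bas bas L
  let y : Fin m × Fin n → ℕ → 𝒦 := fun c s => ι (bas c) ^ q ^ s
  have hper : ∀ c s, y c s = y c (s % (m * n)) := by
    intro c s
    have : ∀ k s, y c (s + m * n * k) = y c s := by
      intro k
      induction k with
      | zero => simp
      | succ k ih =>
        intro s
        rw [mul_add, mul_one, ← add_assoc, ← ih s]
        simp only [y]
        rw [pow_add q (s + m * n * k), mul_comm, pow_mul, ← map_pow ι, ← hK, FiniteField.pow_card]
    conv_lhs => rw [← Nat.mod_add_div s (m * n)]
    exact this _ _
  let B : Matrix (Fin m × Fin n) (Fin m × Fin n) 𝒦 :=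
    Matrix.of fun j c => y c (j.1.val + m * j.2.val)
  have hB : B.det ≠ 0 := by
    intro h
    obtain ⟨v, hv, hv0⟩ := Matrix.exists_vecMul_eq_zero_iff.2 h
    apply hv
    apply moore_det_ne_zero q m n hq1 hm hK ι.toRingHom
    intro x
    rw [← bas.sum_repr x]
    simp only [AlgHom.toRingHom_eq_coe, RingHom.coe_coe, hlin, Finset.mul_sum]
    rw [Finset.sum_comm]
    refine Finset.sum_eq_zero fun c _ => ?_
    have := congrFun hv0 c
    simp only [Matrix.vecMul, dotProduct, B, Matrix.of_apply, Pi.zero_apply, y] at this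
    calc _ = algebraMap F 𝒦 (bas.repr x c) *
          ∑ j : Fin m × Fin n, v j * ι (bas c) ^ q ^ (j.1.val + m * j.2.val) := by
            rw [Finset.mul_sum]
            exact Finset.sum_congr rfl fun _ _ => by ring
      _ = 0 := by rw [this, mul_zero]
  have ht : ∀ i (a b : ℕ), ι (algebraMap E K (t i)) ^ q ^ (a + m * b) =
      ι (algebraMap E K (t i)) ^ q ^ a := by
    intro i a b
    rw [add_comm, pow_add, pow_mul, ← map_pow ι, ← map_pow (algebraMap E K), pow_mul q m b, ← hE,
      FiniteField.pow_card_pow]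
  rw [← LinearMap.charpoly_toMatrix L bas, aeval_def, ← eval_map, ← Matrix.charpoly_map,
    Matrix.eval_charpoly]
  rw [← AlgHom.coe_toRingHom, Matrix.det_det]
  apply mul_left_cancel₀ hB
  rw [mul_comm _ (Matrix.det (Matrix.comp _ _ _ _ _ _)), ← Matrix.det_mul, ← Matrix.det_mul]
  congr 1
  ext1 j c
  obtain ⟨a, b⟩ := j
  -- left side
  have hleft : (B * A.map (algebraMap F 𝒦)) (a, b) c =
      ∑ i ∈ Finset.range (r + 1), ι (algebraMap E K (t i)) ^ q ^ a.val *
        y c (a.val + i + m * b.val) := by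
    have h1 : L (bas c) = ∑ c', A c' c • bas c' := by
      rw [← bas.sum_repr (L (bas c))]
      simp [A, LinearMap.toMatrix_apply]
    have h2 := hlin (a.val + m * b.val) (fun c' => A c' c)
    rw [← h1, hL, map_sum] at h2
    have h3 : ∀ (s : ℕ) (f : ℕ → 𝒦), (∑ i ∈ Finset.range (r + 1), f i) ^ q ^ s =
        ∑ i ∈ Finset.range (r + 1), f i ^ q ^ s := by
      intro s f
      have h1 : ∀ x : 𝒦, x ^ q ^ s = ((FiniteField.frobeniusAlgHom F 𝒦) ^ s) x := by
        intro x
        rw [AlgHom.coe_pow, FiniteField.coe_frobeniusAlgHom, pow_iterate, hq]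
      simp only [h1, map_sum]
    rw [h3] at h2
    rw [Matrix.mul_apply]
    simp only [B, Matrix.of_apply, Matrix.map_apply, y]
    simp only [mul_comm (ι (bas _) ^ _)]
    rw [← h2]
    refine Finset.sum_congr rfl fun i _ => ?_
    rw [map_mul, mul_pow, ht, map_pow, ← pow_mul, ← pow_add]
    congr 3
    ring
  have hright : ∀ i, ∑ j : Fin m × Fin n, (if j.1.val = (a.val + i) % m then
      ι (algebraMap E K (t i)) ^ q ^ a.val * (shiftMat 𝒦 n ^ ((a.val + i) / m)) b j.2 else 0) *
        B j c = ι (algebraMap E K (t i)) ^ q ^ a.val * y c (a.val + i + m * b.val) := by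
    intro i
    have hn : 0 < n := b.pos
    rw [Finset.sum_eq_single ((⟨(a.val + i) % m, Nat.mod_lt _ hm⟩,
      ⟨(b.val + (a.val + i) / m) % n, Nat.mod_lt _ hn⟩) : Fin m × Fin n)]
    · rw [shiftMat_pow]
      simp only [if_true, mul_one, B, Matrix.of_apply]
      rw [hper c (a.val + i + m * b.val), Nat.mod_mul, Nat.add_mul_mod_self_left,
        Nat.add_mul_div_left _ _ hm, add_comm ((a.val + i) / m)]
    · rintro ⟨a', b'⟩ _ hne
      rw [shiftMat_pow]
      simp only
      split_ifs with h1 h2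
      · exact absurd (Prod.ext (Fin.ext h1) (Fin.ext h2)) hne
      · simp
      · simp
    · simp
  have hentry : ∀ j : Fin m × Fin n,
      (Matrix.comp (Fin m) (Fin m) (Fin n) (Fin n) 𝒦
        ((Hmat m r (fun i a => ι (algebraMap E K (t i)) ^ q ^ a) τ).map
          (aeval (shiftMat 𝒦 n)).toRingHom)) (a, b) j =
      (Matrix.scalar (Fin m × Fin n) τ) (a, b) j - ∑ i ∈ Finset.range (r + 1),
        if j.1.val = (a.val + i) % m then
          ι (algebraMap E K (t i)) ^ q ^ a.val * (shiftMat 𝒦 n ^ ((a.val + i) / m)) b j.2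
        else 0 := by
    rintro ⟨a', b'⟩
    simp only [Matrix.comp_apply, Matrix.map_apply, Hmat, Matrix.of_apply, map_sub, map_sum,
      Matrix.sub_apply, Matrix.sum_apply]
    congr 1
    · by_cases h : a = a'
      · subst h
        simp [Matrix.algebraMap_matrix_apply, Matrix.diagonal_apply]
      · simp [h]
    · refine Finset.sum_congr rfl fun i _ => ?_
      split_ifs
      · rw [AlgHom.toRingHom_eq_coe, RingHom.coe_coe, map_mul, aeval_C, map_pow (aeval _), aeval_X,
          ← Algebra.smul_def, Matrix.smul_apply, smul_eq_mul]
      · simp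
  have eL : (B * (Matrix.scalar (Fin m × Fin n) τ - A.map (algebraMap F 𝒦))) (a, b) c =
      τ * B (a, b) c - ∑ i ∈ Finset.range (r + 1), ι (algebraMap E K (t i)) ^ q ^ a.val *
        y c (a.val + i + m * b.val) := by
    rw [mul_sub, Matrix.sub_apply, hleft]
    congr 1
    simp [mul_comm]
  have eR : (Matrix.comp (Fin m) (Fin m) (Fin n) (Fin n) 𝒦
        ((Hmat m r (fun i a => ι (algebraMap E K (t i)) ^ q ^ a) τ).map
          (aeval (shiftMat 𝒦 n)).toRingHom) * B) (a, b) c =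
      τ * B (a, b) c - ∑ i ∈ Finset.range (r + 1), ι (algebraMap E K (t i)) ^ q ^ a.val *
        y c (a.val + i + m * b.val) := by
    rw [Matrix.mul_apply]
    simp only [hentry, sub_mul, Finset.sum_sub_distrib, Finset.sum_mul]
    congr 1
    · simp [Matrix.diagonal_apply]
    · rw [Finset.sum_comm]
      exact Finset.sum_congr rfl fun i _ => hright i
  exact eL.trans eR.symm

/-- let `C_L^{(ℓ)} ∈ 𝔽_q[T]` be the characteristic polynomial of the
`𝔽_q`-linear map induced on `𝔽_{q^{mℓ}}` by a `q`-linearized polynomial `L` of `q`-degree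
`r` with coefficients in `𝔽_{q^m}` (leading coefficient nonzero). Then `{C_L^{(ℓ)}}_{ℓ≥1}`
is a linear recurrence sequence over `𝔽_q[T]` of order at most `2^r`. -/
theorem charpoly_sequence_linear_recurrence
    (p ν : ℕ) [Fact p.Prime] (hν : 0 < ν)
    (F : Type*) [Field F] [Fintype F] [CharP F p] (hq : Fintype.card F = p ^ ν)
    (E : Type*) [Field E] [Fintype E] [Algebra F E]
    (m : ℕ) (hm : Module.finrank F E = m)
    (r : ℕ) (hr : 1 ≤ r) (t : ℕ → E) (htr : t r ≠ 0)
    (k : ℕ → Type*) [∀ ℓ, Field (k ℓ)] [∀ ℓ, Fintype (k ℓ)] [∀ ℓ, CharP (k ℓ) p]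
    [∀ ℓ, Algebra F (k ℓ)] [∀ ℓ, Algebra E (k ℓ)] [∀ ℓ, IsScalarTower F E (k ℓ)]
    [∀ ℓ, Module.Finite F (k ℓ)]
    (hcard : ∀ ℓ, 1 ≤ ℓ → Fintype.card (k ℓ) = p ^ (ν * m * ℓ))
    (Cseq : ℕ → Polynomial F)
    (hC : ∀ ℓ, Cseq ℓ = LinearMap.charpoly
      (qLinearMap F p ν hq (k ℓ) r (fun i => algebraMap E (k ℓ) (t i)))) :
    ∃ d ≤ 2 ^ r, ∃ c : Fin d → Polynomial F,
      ∀ ℓ, 1 ≤ ℓ → Cseq (ℓ + d) = ∑ i : Fin d, c i * Cseq (ℓ + i.val) := by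
  classical
  set q := p ^ ν with hqdef
  have : Finite E := inferInstance
  have : Module.Finite F E := Module.Finite.of_finite
  have hm0 : 0 < m := hm ▸ Module.finrank_pos
  have hE : Fintype.card E = q ^ m := by
    rw [Module.card_eq_pow_finrank (K := F) (V := E), hq, hm]
  let 𝒦 := AlgebraicClosure (FractionRing F[X])
  let ε : E →ₐ[F] 𝒦 := IsAlgClosed.lift
  have hinj : Function.Injective (algebraMap F[X] 𝒦) := by
    rw [IsScalarTower.algebraMap_eq F[X] (FractionRing F[X]) 𝒦]
    exact (algebraMap (FractionRing F[X]) 𝒦).injective.comp (IsFractionRing.injective F[X] (FractionRing F[X]))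
  let τ : 𝒦 := algebraMap F[X] 𝒦 X
  have hτ : ∀ f : F[X], algebraMap F[X] 𝒦 f = aeval τ f := by
    intro f
    rw [aeval_algebraMap_apply, aeval_X_left_apply]
  let O := integralClosure F[X] 𝒦
  have hεO : ∀ e : E, ε e ∈ O := by
    intro e
    have h1 : IsIntegral F (ε e) := (Algebra.IsIntegral.isIntegral (R := F) e).map ε
    exact h1.tower_top
  have hτO : τ ∈ O := isIntegral_algebraMap
  let G : 𝒦[X] := (Hmat m r (fun i a => ε (t i) ^ q ^ a) τ).det
  let w : E := (Wmat m r (fun a => t r ^ q ^ a)).det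
  have hw : w ≠ 0 := Wmat_det_ne_zero _ _ _ fun a => pow_ne_zero _ htr
  have hww : (Wmat m r (fun a => ε (t r) ^ q ^ a)).det = ε w := by
    rw [← AlgHom.coe_toRingHom, RingHom.map_det]
    congr 1
    ext1 a a'
    simp only [Wmat, RingHom.mapMatrix_apply, Matrix.map_apply, Matrix.of_apply, map_neg]
    split_ifs <;> simp
  have hεw : ε w ≠ 0 := by simpa using hw
  obtain ⟨hdeg, hcoeff⟩ := Hdet_degree m r hm0 hr (fun i a => ε (t i) ^ q ^ a) τ
  change G.natDegree ≤ r at hdeg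
  change G.coeff r = _ at hcoeff
  rw [hww] at hcoeff
  have hnd : G.natDegree = r :=
    le_antisymm hdeg (le_natDegree_of_ne_zero (by rw [hcoeff]; exact hεw))
  have hlc : G.leadingCoeff = ε w := by rw [leadingCoeff, hnd, hcoeff]
  have hG0 : G ≠ 0 := by
    rintro h
    rw [h, leadingCoeff_zero] at hlc
    exact hεw hlc.symm
  have hroot : ∀ b ∈ G.roots, b ∈ O := by
    intro b hb
    let G₀ : O[X] := C ⟨ε w⁻¹, hεO _⟩ *
      (Hmat m r (fun i a => (⟨ε (t i), hεO _⟩ : O) ^ q ^ a) ⟨τ, hτO⟩).det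
    have hmap : G₀.map (algebraMap O 𝒦) = C (ε w⁻¹) * G := by
      rw [Polynomial.map_mul, Hmat_map, map_C]
      rfl
    have hmon : G₀.Monic := by
      apply monic_of_injective (f := algebraMap O 𝒦) Subtype.val_injective
      rw [hmap, Monic, leadingCoeff_mul, leadingCoeff_C, hlc, ← map_mul, inv_mul_cancel₀ hw,
        map_one]
    have hb' : IsIntegral O b := by
      refine ⟨G₀, hmon, ?_⟩
      rw [← eval_map, hmap, eval_mul, (mem_roots hG0).1 hb, mul_zero]
    exact isIntegral_trans b hb'
  obtain ⟨f, hf⟩ : ∃ f : Fin r → 𝒦, G.roots = Finset.univ.val.map f := by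
    have hlen : G.roots.toList.length = r := by
      rw [Multiset.length_toList, ← (IsAlgClosed.splits G).natDegree_eq_card_roots, hnd]
    refine ⟨fun i => G.roots.toList.get (i.cast hlen.symm), ?_⟩
    rw [Fin.univ_val_map]
    conv_lhs => rw [← Multiset.coe_toList G.roots]
    congr 1
    apply List.ext_get
    · simp [hlen]
    · intro n h1 h2
      simp
  have hfO : ∀ i, f i ∈ O := fun i => hroot _ (by rw [hf]; simp)
  have hg0O : (-1) ^ r * ε w ∈ O := O.mul_mem (O.pow_mem (O.neg_mem O.one_mem) _) (hεO _)
  have hmain : ∀ ℓ, 1 ≤ ℓ → algebraMap F[X] 𝒦 (Cseq ℓ) =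
      ((-1) ^ r * ε w) ^ ℓ * ∏ i, (f i ^ ℓ - 1) := by
    intro ℓ hℓ
    let _ : Algebra E 𝒦 := ε.toRingHom.toAlgebra
    have hst : IsScalarTower F E 𝒦 := IsScalarTower.of_algebraMap_eq fun x => (ε.commutes x).symm
    have : Module.Finite E (k ℓ) := Module.Finite.of_finite
    let ι : k ℓ →ₐ[E] 𝒦 := IsAlgClosed.lift
    have hιt : ∀ e, (ι.restrictScalars F) (algebraMap E (k ℓ) e) = ε e := fun e => ι.commutes e
    have h1 := charpoly_eval_eq (ι.restrictScalars F) q m ℓ r hq hm0 hE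
      (by rw [hcard ℓ hℓ, hqdef, ← pow_mul, mul_assoc]) t
      (qLinearMap F p ν hq (k ℓ) r (fun i => algebraMap E (k ℓ) (t i)))
      (fun x => by rw [← hq]; rfl) τ
    simp only [hιt] at h1
    rw [hτ, hC, h1, det_aeval_shift ℓ hℓ]
    change ((-1) ^ G.natDegree * G.leadingCoeff) ^ ℓ * (G.roots.map _).prod = _
    rw [hnd, hlc, hf, Multiset.map_map]
    rfl
  obtain ⟨c, hc⟩ := recur_aux r (fun i => (⟨f i, hfO i⟩ : O)) ⟨_, hg0O⟩
  obtain ⟨c', hc'⟩ := retract_aux hinj (2 ^ r) (fun i => (c i : 𝒦)) (fun i => (c i).2)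
  refine ⟨2 ^ r, le_rfl, c', fun ℓ hℓ => hc' _ _ ?_⟩
  have h2 := congrArg (algebraMap O 𝒦) (hc ℓ)
  simp only [map_mul, map_pow, map_prod, map_sub, map_one, map_sum] at h2
  rw [hmain _ (le_add_right hℓ)]
  refine h2.trans (Finset.sum_congr rfl fun i _ => ?_)
  rw [hmain _ (le_add_right hℓ)]
  rfl
end
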